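/- Fix parameters $x$ and $y$ (finitely many values in $[0,1)$) and let $Q_x(z) = \prod_i \frac{1+z x_i}{1-z x_i}$, $\widetilde Q_y(z) = Q_y(1/z)$, and $\phi(z) = Q_x(z)\,\widetilde Q_y(z)$. With $H_1 = H(Q_x \widetilde Q_y^{-1})$ and $H_2 = H(Q_y \widetilde Q_x^{-1})$ (Hankel operators on $\ell^2(\mathbb{Z}_{\ge 0})$), one has $I - H(\phi)\,H(\widetilde\phi^{-1}) = T(\phi)\,T(\phi^{-1})$, and moreover $(I + L_x L_y)^{-1} = I - H_1 H_2$ and $(I + L_y L_x)^{-1} = I - H_2 H_1$, where $L_x = H(Q_x) T(\widetilde Q_x^{-1}) J$ and $L_y = H(Q_y) T(\widetilde Q_y^{-1}) J$ with $J = \mathrm{diag}((-1)^j)$. -/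

import Mathlib

/-!
The symbols lie in the Wiener algebra of absolutely convergent Fourier series, so all the Toeplitz
and Hankel matrices involved have columns uniformly bounded in `ℓ¹`. Such matrices form a ring
`BM`: the entrywise series for products converge absolutely and multiplication is associative.
The entrywise claims are therefore identities in a noncommutative ring.

In this ring, splitting the convolution formula for the coefficients of `f g` into indices `≥ 0`
and `< 0` gives `T(f)T(g) = T(fg) - H(f)H(g̃)` (`wiener.T_mul_T`) and
`T(f)H(g) + H(f)T(g̃) = H(fg)` (`wiener.T_mul_H_add`). The first identity of the theorem is the
former with `g = f⁻¹`.

Write `a = Q_x`, `b = Q_y`. Both symbols and their inverses are analytic in the disc, so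
`H(ã) = H(ã⁻¹) = 0` and likewise for `b`; moreover `a(-z) = a⁻¹(z)`, so conjugation by `J` sends
`T(b̃⁻¹)` to `T(b̃)` and `H(b)` to `-H(b⁻¹)`. It follows that
* `I - H₁H₂ = T(b̃⁻¹) T(a) T(b̃) T(a⁻¹)` (`IsSym.one_sub_H_mul_H`),
* `I + L_x L_y = T(a) T(b̃⁻¹) T(a⁻¹) T(b̃)` (`IsSym.one_add_L_mul_L`),
and the two products are inverse to each other because `T(a)T(a⁻¹) = T(a⁻¹)T(a) = I` and
`T(b̃)T(b̃⁻¹) = T(b̃⁻¹)T(b̃) = I`.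
-/

/-- The `n`-th Fourier coefficient of `z ↦ f(z)` restricted to the unit circle. -/
noncomputable def circCoeff (f : ℂ → ℂ) (n : ℤ) : ℂ :=
  (2 * Real.pi : ℝ)⁻¹ •
    ∫ θ in (0 : ℝ)..(2 * Real.pi),
      f (Complex.exp ((θ : ℂ) * Complex.I)) * Complex.exp (-(n : ℂ) * (θ : ℂ) * Complex.I)

/-- Toeplitz matrix entry `T(f)_{j,k} = f_{j-k}`. -/
noncomputable def Toep (f : ℂ → ℂ) (j k : ℕ) : ℂ := circCoeff f ((j : ℤ) - (k : ℤ))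

/-- Hankel matrix entry `H(f)_{j,k} = f_{j+k+1}`. -/
noncomputable def Hop (f : ℂ → ℂ) (j k : ℕ) : ℂ := circCoeff f ((j : ℤ) + (k : ℤ) + 1)

/-- The symbol `Q_x(z) = ∏ᵢ (1 + xᵢ z)/(1 - xᵢ z)`. -/
noncomputable def Qsym {M : ℕ} (x : Fin M → ℝ) (z : ℂ) : ℂ :=
  ∏ i, (1 + (x i : ℂ) * z) / (1 - (x i : ℂ) * z)

/-- The matrix `L_x = H(Q_x) T(Q̃_x⁻¹) J`, `J = diag((-1)^j)`. -/
noncomputable def Lop {M : ℕ} (x : Fin M → ℝ) (j k : ℕ) : ℂ :=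
  ((-1 : ℂ) ^ k) * ∑' l : ℕ, Hop (Qsym x) j l * Toep (fun z => (Qsym x z⁻¹)⁻¹) l k

/-! ### The ring of matrices with uniformly summable columns -/

open scoped ENNReal

/-- Infinite complex matrices whose columns are uniformly bounded in `ℓ¹`, i.e. the matrices of
bounded operators on `ℓ¹`. -/
@[ext]
structure BM where
  /-- The matrix entries. -/
  val : ℕ → ℕ → ℂ
  bdd : ∃ C : ℝ≥0∞, C ≠ ∞ ∧ ∀ k, ∑' j, ‖val j k‖ₑ ≤ C

namespace BM

lemma entry_le (a : BM) : ∃ C : ℝ≥0∞, C ≠ ∞ ∧ ∀ j k, ‖a.val j k‖ₑ ≤ C := by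
  obtain ⟨C, hC, h⟩ := a.bdd
  exact ⟨C, hC, fun j k => (ENNReal.le_tsum (f := fun j => ‖a.val j k‖ₑ) j).trans (h k)⟩

lemma summable_mul (a b : BM) (j k : ℕ) : Summable fun l => a.val j l * b.val l k := by
  obtain ⟨C, hC, hc⟩ := a.entry_le
  obtain ⟨D, hD, hd⟩ := b.bdd
  apply Summable.of_enorm
  refine ne_top_of_le_ne_top (ENNReal.mul_ne_top hC hD) ?_
  calc ∑' l, ‖a.val j l * b.val l k‖ₑ ≤ ∑' l, C * ‖b.val l k‖ₑ :=
        ENNReal.tsum_le_tsum fun l => by rw [enorm_mul]; gcongr; exact hc j l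
    _ ≤ C * D := by rw [ENNReal.tsum_mul_left]; gcongr; exact hd k

noncomputable instance : Mul BM where
  mul a b :=
    { val := fun j k => ∑' l, a.val j l * b.val l k
      bdd := by
        obtain ⟨C, hC, hc⟩ := a.bdd
        obtain ⟨D, hD, hd⟩ := b.bdd
        refine ⟨C * D, ENNReal.mul_ne_top hC hD, fun k => ?_⟩
        calc ∑' j, ‖∑' l, a.val j l * b.val l k‖ₑ
            ≤ ∑' j, ∑' l, ‖a.val j l‖ₑ * ‖b.val l k‖ₑ :=
              ENNReal.tsum_le_tsum fun j => by
                simpa only [enorm_mul] using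
                  enorm_tsum_le_tsum_enorm (f := fun l => a.val j l * b.val l k)
          _ = ∑' l, (∑' j, ‖a.val j l‖ₑ) * ‖b.val l k‖ₑ := by
              rw [ENNReal.tsum_comm]; simp only [ENNReal.tsum_mul_right]
          _ ≤ ∑' l, C * ‖b.val l k‖ₑ := ENNReal.tsum_le_tsum fun l => by gcongr; exact hc l
          _ ≤ C * D := by rw [ENNReal.tsum_mul_left]; gcongr; exact hd k }

noncomputable instance : Add BM where
  add a b :=
    { val := fun j k => a.val j k + b.val j k
      bdd := by
        obtain ⟨C, hC, hc⟩ := a.bdd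
        obtain ⟨D, hD, hd⟩ := b.bdd
        refine ⟨C + D, ENNReal.add_ne_top.2 ⟨hC, hD⟩, fun k => ?_⟩
        calc ∑' j, ‖a.val j k + b.val j k‖ₑ ≤ ∑' j, (‖a.val j k‖ₑ + ‖b.val j k‖ₑ) :=
              ENNReal.tsum_le_tsum fun j => enorm_add_le _ _
          _ ≤ C + D := by rw [ENNReal.tsum_add]; exact add_le_add (hc k) (hd k) }

noncomputable instance : Neg BM where
  neg a := { val := fun j k => - a.val j k, bdd := by simpa only [enorm_neg] using a.bdd }

noncomputable instance : Zero BM where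
  zero := { val := fun _ _ => 0, bdd := ⟨0, by simp, by simp⟩ }

/-- The diagonal matrix with entries `s^k`, where `|s| = 1`. -/
noncomputable def diag (s : ℂ) (hs : ‖s‖ = 1) : BM where
  val j k := if j = k then s ^ k else 0
  bdd := by
    refine ⟨1, by simp, fun k => ?_⟩
    rw [tsum_eq_single k (by intro j hj; simp [hj])]
    simp [← ofReal_norm, hs]

noncomputable instance : One BM where
  one :=
    { val := fun j k => if j = k then 1 else 0
      bdd := by simpa only [diag, one_pow] using (diag 1 norm_one).bdd }

lemma val_mul (a b : BM) (j k : ℕ) : (a * b).val j k = ∑' l, a.val j l * b.val l k := rfl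
lemma val_add (a b : BM) (j k : ℕ) : (a + b).val j k = a.val j k + b.val j k := rfl
lemma val_neg (a : BM) (j k : ℕ) : (-a).val j k = -a.val j k := rfl
lemma val_zero (j k : ℕ) : (0 : BM).val j k = 0 := rfl
lemma val_one (j k : ℕ) : (1 : BM).val j k = if j = k then 1 else 0 := rfl

lemma mul_diag (a : BM) (s : ℂ) (hs : ‖s‖ = 1) (j k : ℕ) :
    (a * diag s hs).val j k = a.val j k * s ^ k := by
  rw [val_mul, tsum_eq_single k (by intro j hj; simp [diag, hj])]
  simp [diag]

lemma diag_mul (a : BM) (s : ℂ) (hs : ‖s‖ = 1) (j k : ℕ) :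
    (diag s hs * a).val j k = s ^ j * a.val j k := by
  rw [val_mul, tsum_eq_single j (by intro l hl; simp [diag, hl.symm])]
  simp [diag]

protected lemma mul_assoc (a b c : BM) : a * b * c = a * (b * c) := by
  ext j k
  simp only [val_mul, ← tsum_mul_right, ← tsum_mul_left]
  rw [Summable.tsum_comm]
  · simp only [mul_assoc]
  · obtain ⟨A, hA, ha⟩ := a.entry_le
    obtain ⟨B, hB, hb⟩ := b.bdd
    obtain ⟨C, hC, hc⟩ := c.bdd
    apply Summable.of_enorm
    refine ne_top_of_le_ne_top (ENNReal.mul_ne_top (ENNReal.mul_ne_top hA hB) hC) ?_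
    rw [ENNReal.tsum_prod', ENNReal.tsum_comm]
    simp only [Function.uncurry_apply_pair]
    calc ∑' l, ∑' m, ‖a.val j m * b.val m l * c.val l k‖ₑ
        ≤ ∑' l, ∑' m, A * ‖b.val m l‖ₑ * ‖c.val l k‖ₑ :=
          ENNReal.tsum_le_tsum fun l => ENNReal.tsum_le_tsum fun m => by
            rw [enorm_mul, enorm_mul]; gcongr; exact ha j m
      _ = ∑' l, A * (∑' m, ‖b.val m l‖ₑ) * ‖c.val l k‖ₑ := by
          simp only [ENNReal.tsum_mul_right, ENNReal.tsum_mul_left]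
      _ ≤ ∑' l, A * B * ‖c.val l k‖ₑ :=
          ENNReal.tsum_le_tsum fun l => by gcongr; exact hb l
      _ ≤ A * B * C := by rw [ENNReal.tsum_mul_left]; gcongr; exact hc k

noncomputable instance : Ring BM where
  add_assoc a b c := by ext; simp only [val_add, add_assoc]
  zero_add a := by ext; simp only [val_add, val_zero, zero_add]
  add_zero a := by ext; simp only [val_add, val_zero, add_zero]
  add_comm a b := by ext; simp only [val_add, add_comm]
  neg_add_cancel a := by ext; simp only [val_add, val_neg, val_zero, neg_add_cancel]
  mul_assoc := BM.mul_assoc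
  zero_mul a := by ext; simp only [val_mul, val_zero, zero_mul, tsum_zero]
  mul_zero a := by ext; simp only [val_mul, val_zero, mul_zero, tsum_zero]
  one_mul a := by
    ext j k
    rw [val_mul, tsum_eq_single j (by intro l hl; simp [val_one, hl.symm])]
    simp [val_one]
  mul_one a := by
    ext j k
    rw [val_mul, tsum_eq_single k (by intro l hl; simp [val_one, hl])]
    simp [val_one]
  left_distrib a b c := by
    ext j k
    simp only [val_mul, val_add, mul_add]
    exact (summable_mul a b j k).tsum_add (summable_mul a c j k)
  right_distrib a b c := by
    ext j k
    simp only [val_mul, val_add, add_mul]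
    exact (summable_mul a c j k).tsum_add (summable_mul b c j k)
  nsmul := nsmulRec
  zsmul := zsmulRec

lemma val_sub (a b : BM) (j k : ℕ) : (a - b).val j k = a.val j k - b.val j k := by
  rw [sub_eq_add_neg, val_add, val_neg, sub_eq_add_neg]

end BM

/-! ### Absolutely convergent Fourier series -/

/-- `f` is the sum on the unit circle of the absolutely convergent Fourier series with
coefficients `a`. -/
def HasFourier (f : Circle → ℂ) (a : ℤ → ℂ) : Prop :=
  (Summable fun n => ‖a n‖) ∧ ∀ z : Circle, HasSum (fun n => a n * (z : ℂ) ^ n) (f z)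

namespace HasFourier

lemma integral_exp_int (n : ℤ) :
    ∫ θ in (0 : ℝ)..(2 * Real.pi), Complex.exp ((n : ℂ) * Complex.I * θ)
      = if n = 0 then (2 * Real.pi : ℂ) else 0 := by
  split_ifs with h
  · simp [h]
  · rw [integral_exp_mul_complex (mul_ne_zero (Int.cast_ne_zero.2 h) Complex.I_ne_zero)]
    have : Complex.exp ((n : ℂ) * Complex.I * ((2 * Real.pi : ℝ) : ℂ)) = 1 := by
      rw [← Complex.exp_int_mul_two_pi_mul_I n]
      push_cast
      ring_nf
    rw [this]
    simp

/-- The Fourier coefficients are recovered by integrating the series term by term. -/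
lemma circCoeff_eq {F : ℂ → ℂ} {a : ℤ → ℂ} (h : HasFourier (fun z => F z) a) (n : ℤ) :
    circCoeff F n = a n := by
  have hpi : (2 * Real.pi : ℂ) ≠ 0 := by simp [Real.pi_ne_zero]
  have key : HasSum (fun m : ℤ => ∫ θ in (0 : ℝ)..(2 * Real.pi),
      a m * Complex.exp (((m - n : ℤ) : ℂ) * Complex.I * θ))
      (∫ θ in (0 : ℝ)..(2 * Real.pi),
        F (Complex.exp ((θ : ℂ) * Complex.I)) * Complex.exp (-(n : ℂ) * (θ : ℂ) * Complex.I)) := by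
    refine intervalIntegral.hasSum_integral_of_dominated_convergence (fun m _ => ‖a m‖)
      (fun m => ?_) (fun m => ?_) ?_ ?_ ?_
    · exact (Continuous.aestronglyMeasurable (by fun_prop))
    · refine Filter.Eventually.of_forall fun θ _ => ?_
      have : ((m - n : ℤ) : ℂ) * Complex.I * θ = (((m - n : ℤ) * θ : ℝ) : ℂ) * Complex.I := by
        push_cast; ring
      rw [norm_mul, this, Complex.norm_exp_ofReal_mul_I, mul_one]
    · exact Filter.Eventually.of_forall fun θ _ => h.1
    · exact intervalIntegrable_const
    · refine Filter.Eventually.of_forall fun θ _ => ?_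
      have := (h.2 (Circle.exp θ)).mul_right (Complex.exp (-(n : ℂ) * (θ : ℂ) * Complex.I))
      rw [Circle.coe_exp] at this
      refine HasSum.congr_fun this fun m => ?_
      rw [mul_assoc (a m), ← Complex.exp_int_mul, ← Complex.exp_add]
      congr 2
      push_cast
      ring
  simp only [intervalIntegral.integral_const_mul, integral_exp_int] at key
  rw [circCoeff, key.unique (hasSum_single n fun m hm => by simp [sub_eq_zero, hm])]
  rw [Complex.real_smul]
  push_cast
  simp only [sub_self, if_true]
  field_simp

/-- Uniqueness of the coefficients; `f` is extended to `ℂ` by zero so that `circCoeff` applies. -/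
lemma unique {f : Circle → ℂ} {a b : ℤ → ℂ} (ha : HasFourier f a) (hb : HasFourier f b) :
    a = b := by
  have hF : (fun z : Circle => Function.extend ((↑) : Circle → ℂ) f 0 z) = f := by
    ext z; exact Circle.coe_injective.extend_apply f 0 z
  ext n
  rw [← hF] at ha hb
  exact (circCoeff_eq ha n).symm.trans (circCoeff_eq hb n)

/-- The product of two absolutely convergent Fourier series is the Fourier series of the
convolution of the coefficients. -/
lemma mul {f g : Circle → ℂ} {a b : ℤ → ℂ} (ha : HasFourier f a) (hb : HasFourier g b) :
    HasFourier (f * g) (fun n => ∑' m, a (n - m) * b m) := by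
  -- The double series is summed along the lines `i + j = n`, parametrized by `(n, m) ↦ (n - m, m)`.
  let e : ℤ × ℤ ≃ ℤ × ℤ :=
    { toFun := fun p => (p.1 - p.2, p.2)
      invFun := fun p => (p.1 + p.2, p.2)
      left_inv := fun p => by simp
      right_inv := fun p => by simp }
  have hs : Summable fun p : ℤ × ℤ => ‖a (p.1 - p.2) * b p.2‖ :=
    (e.summable_iff (f := fun p : ℤ × ℤ => ‖a p.1 * b p.2‖)).2 (ha.1.mul_norm hb.1)
  have hs' : ∀ n, Summable fun m => ‖a (n - m) * b m‖ := fun n => hs.prod_factor n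
  refine ⟨?_, fun z => ?_⟩
  · refine Summable.of_nonneg_of_le (fun _ => norm_nonneg _) (fun n => ?_) hs.prod
    exact norm_tsum_le_tsum_norm (hs' n)
  · have hz : ∀ (c : ℤ → ℂ), (Summable fun n => ‖c n‖) →
        Summable fun n => ‖c n * (z : ℂ) ^ n‖ := by
      intro c hc
      simpa only [norm_mul, norm_zpow, Circle.norm_coe, one_zpow, mul_one] using hc
    have hzz : Summable fun p : ℤ × ℤ => (a p.1 * (z : ℂ) ^ p.1) * (b p.2 * (z : ℂ) ^ p.2) :=
      summable_mul_of_summable_norm (f := fun n => a n * (z : ℂ) ^ n)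
        (g := fun n => b n * (z : ℂ) ^ n) (hz a ha.1) (hz b hb.1)
    have h1 : HasSum (fun p : ℤ × ℤ => (a p.1 * (z : ℂ) ^ p.1) * (b p.2 * (z : ℂ) ^ p.2))
        (f z * g z) :=
      HasSum.mul (f := fun n => a n * (z : ℂ) ^ n) (g := fun n => b n * (z : ℂ) ^ n)
        (ha.2 z) (hb.2 z) hzz
    have h3 := e.hasSum_iff.2 h1
    refine HasSum.prod_fiberwise h3 fun n => ?_
    refine HasSum.congr_fun ((hs' n).of_norm.hasSum.mul_right ((z : ℂ) ^ n)) fun m => ?_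
    simp only [e, Function.comp_apply, Equiv.coe_fn_mk]
    rw [mul_mul_mul_comm, ← zpow_add₀ z.coe_ne_zero, sub_add_cancel]

lemma inv {f : Circle → ℂ} {a : ℤ → ℂ} (ha : HasFourier f a) :
    HasFourier (fun z => f z⁻¹) (fun n => a (-n)) := by
  refine ⟨(Equiv.neg ℤ).summable_iff.2 ha.1, fun z => ?_⟩
  convert (Equiv.neg ℤ).hasSum_iff.2 (ha.2 z⁻¹) using 2 with n
  simp

lemma neg {f : Circle → ℂ} {a : ℤ → ℂ} (ha : HasFourier f a) :
    HasFourier (fun z => f (-z)) (fun n => (-1) ^ n * a n) := by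
  refine ⟨by simpa using ha.1, fun z => ?_⟩
  convert ha.2 (-z) using 2 with n
  rw [Circle.coe_neg, neg_eq_neg_one_mul (z : ℂ), mul_zpow]
  ring

/-- A power series, seen as a Fourier series. -/
lemma of_nat {f : Circle → ℂ} {c : ℕ → ℂ} (hc : Summable fun n => ‖c n‖)
    (hf : ∀ z : Circle, HasSum (fun n => c n * (z : ℂ) ^ n) (f z)) :
    HasFourier f (fun n => if n < 0 then 0 else c n.toNat) := by
  have hpos : ∀ n : ℕ, ¬ (n : ℤ) < 0 := fun n => by omega
  have hneg : ∀ n : ℕ, -((n : ℤ) + 1) < 0 := fun n => by omega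
  refine ⟨Summable.of_nat_of_neg_add_one ?_ ?_, fun z => ?_⟩
  · simpa only [hpos, if_false, Int.toNat_natCast] using hc
  · simp only [hneg, if_true, norm_zero, summable_zero]
  · rw [← add_zero (f z)]
    refine HasSum.of_nat_of_neg_add_one ?_ ?_
    · simpa only [hpos, if_false, Int.toNat_natCast, zpow_natCast] using hf z
    · simp only [hneg, if_true, zero_mul, hasSum_zero]

end HasFourier

lemma hasFourier_one : HasFourier 1 (fun n => if n = 0 then 1 else 0) := by
  refine ⟨summable_of_ne_finset_zero (s := {0}) (by simp +contextual), fun z => ?_⟩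
  convert hasSum_single (0 : ℤ) (f := fun n => (if n = 0 then (1 : ℂ) else 0) * (z : ℂ) ^ n) ?_
  · simp
  · intro n hn; simp [hn]

/-! ### The Wiener algebra, Toeplitz and Hankel matrices -/

/-- The Wiener algebra (as a multiplicative monoid): functions on the circle with an absolutely
convergent Fourier series. -/
def wiener : Submonoid (Circle → ℂ) where
  carrier := {f | ∃ a, HasFourier f a}
  one_mem' := ⟨_, hasFourier_one⟩
  mul_mem' := by rintro f g ⟨a, ha⟩ ⟨b, hb⟩; exact ⟨_, ha.mul hb⟩

/-- The functions in the Wiener algebra whose negative Fourier coefficients vanish, i.e. the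
boundary values of functions analytic in the disc. -/
def wienerPlus : Submonoid (Circle → ℂ) where
  carrier := {f | ∃ a, HasFourier f a ∧ ∀ n < 0, a n = 0}
  one_mem' := ⟨_, hasFourier_one, fun n hn => by simp [hn.ne]⟩
  mul_mem' := by
    rintro f g ⟨a, ha, ha0⟩ ⟨b, hb, hb0⟩
    refine ⟨_, ha.mul hb, fun n hn => ?_⟩
    convert tsum_zero with m
    rcases lt_or_ge m 0 with hm | hm
    · rw [hb0 m hm, mul_zero]
    · rw [ha0 _ (by omega), zero_mul]

namespace wiener

/-- The Fourier coefficients of a function in the Wiener algebra. -/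
noncomputable def coeff (f : wiener) : ℤ → ℂ := f.2.choose

lemma hasFourier (f : wiener) : HasFourier f.1 (coeff f) := f.2.choose_spec

lemma coeff_eq {f : wiener} {a : ℤ → ℂ} (h : HasFourier f.1 a) : coeff f = a :=
  (hasFourier f).unique h

lemma circCoeff_eq {F : ℂ → ℂ} (f : wiener) (h : ∀ z : Circle, F z = f.1 z) (n : ℤ) :
    circCoeff F n = coeff f n :=
  HasFourier.circCoeff_eq (by simpa only [h] using hasFourier f) n

/-- The function `z ↦ f(1/z)`. -/
noncomputable def rev (f : wiener) : wiener := ⟨fun z => f.1 z⁻¹, _, (hasFourier f).inv⟩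

/-- The function `z ↦ f(-z)`. -/
noncomputable def alt (f : wiener) : wiener := ⟨fun z => f.1 (-z), _, (hasFourier f).neg⟩

lemma rev_rev (f : wiener) : rev (rev f) = f := by
  ext z; simp [rev]

lemma rev_mul (f g : wiener) : rev (f * g) = rev f * rev g := rfl

lemma rev_one : rev 1 = 1 := rfl

lemma alt_rev (f : wiener) : alt (rev f) = rev (alt f) := by
  ext z
  change f.1 (-z)⁻¹ = f.1 (-z⁻¹)
  rw [inv_neg]

lemma coeff_rev (f : wiener) (n : ℤ) : coeff (rev f) n = coeff f (-n) :=
  congrFun (coeff_eq (f := rev f) (hasFourier f).inv) n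

lemma coeff_alt (f : wiener) (n : ℤ) : coeff (alt f) n = (-1) ^ n * coeff f n :=
  congrFun (coeff_eq (f := alt f) (hasFourier f).neg) n

lemma coeff_one (n : ℤ) : coeff 1 n = if n = 0 then 1 else 0 :=
  congrFun (coeff_eq (f := 1) hasFourier_one) n

lemma coeff_mul (f g : wiener) (n : ℤ) : coeff (f * g) n = ∑' m, coeff f (n - m) * coeff g m :=
  congrFun (coeff_eq (f := f * g) ((hasFourier f).mul (hasFourier g))) n

lemma summable_coeff_mul (f g : wiener) (e e' : ℕ → ℤ) (he : e.Injective) (he' : e'.Injective) :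
    Summable fun m => coeff f (e m) * coeff g (e' m) := by
  have h1 : Summable fun m => ‖coeff f (e m)‖ := (hasFourier f).1.comp_injective he
  have h2 : Summable fun m => ‖coeff g (e' m)‖ := (hasFourier g).1.comp_injective he'
  have h3 := summable_mul_of_summable_norm (f := fun m => coeff f (e m))
    (g := fun m => coeff g (e' m)) h1 h2
  exact h3.comp_injective (i := fun m : ℕ => (m, m)) fun _ _ h => (Prod.ext_iff.1 h).1

lemma tsum_enorm_coeff_le (f : wiener) (e : ℕ → ℤ) (he : e.Injective) :
    ∑' n, ‖coeff f (e n)‖ₑ ≤ ∑' n, ‖coeff f n‖ₑ :=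
  ENNReal.tsum_comp_le_tsum_of_injective he _

/-- The Toeplitz matrix `T(f)`. -/
noncomputable def T (f : wiener) : BM where
  val j k := coeff f ((j : ℤ) - k)
  bdd := ⟨∑' n, ‖coeff f n‖ₑ, tsum_enorm_ne_top_iff_summable_norm.2 (hasFourier f).1,
    fun k => tsum_enorm_coeff_le f (fun j => (j : ℤ) - k) fun i j h => by simpa using h⟩

/-- The Hankel matrix `H(f)`. -/
noncomputable def H (f : wiener) : BM where
  val j k := coeff f ((j : ℤ) + k + 1)
  bdd := ⟨∑' n, ‖coeff f n‖ₑ, tsum_enorm_ne_top_iff_summable_norm.2 (hasFourier f).1,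
    fun k => tsum_enorm_coeff_le f (fun j => (j : ℤ) + k + 1) fun i j h => by simpa using h⟩

lemma T_val (f : wiener) (j k : ℕ) : (T f).val j k = coeff f ((j : ℤ) - k) := rfl
lemma H_val (f : wiener) (j k : ℕ) : (H f).val j k = coeff f ((j : ℤ) + k + 1) := rfl

/-- A convolution over `ℤ`, recentred and split into the sum over `n ≥ 0` and over `n < 0`. -/
lemma coeff_mul_split (f g : wiener) (p q : ℤ) :
    coeff (f * g) (p + q) = ∑' l : ℕ, coeff f (p - l) * coeff g (l + q)
      + ∑' l : ℕ, coeff f (p + l + 1) * coeff g (q - l - 1) := by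
  have h1 : coeff (f * g) (p + q) = ∑' m : ℤ, coeff f (p - m) * coeff g (m + q) := by
    rw [coeff_mul,
      ← (Equiv.addRight q).tsum_eq (fun m => coeff f (p + q - m) * coeff g m)]
    refine tsum_congr fun m => ?_
    simp only [Equiv.coe_addRight]
    congr 2
    ring
  have h2 : Summable fun l : ℕ => coeff f (p - (l : ℤ)) * coeff g ((l : ℤ) + q) :=
    summable_coeff_mul f g (fun l => p - (l : ℤ)) (fun l => (l : ℤ) + q)
      (fun i j h => by simpa using h) (fun i j h => by simpa using h)
  have h3 : Summable fun l : ℕ => coeff f (p - -((l : ℤ) + 1)) * coeff g (-((l : ℤ) + 1) + q) :=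
    summable_coeff_mul f g (fun l => p - -((l : ℤ) + 1)) (fun l => -((l : ℤ) + 1) + q)
      (fun i j h => by simpa using h) (fun i j h => by simpa using h)
  rw [h1, tsum_of_nat_of_neg_add_one (f := fun m : ℤ => coeff f (p - m) * coeff g (m + q)) h2 h3]
  congr 1
  refine tsum_congr fun l => ?_
  congr 2 <;> ring

lemma T_mul_T (f g : wiener) : T f * T g = T (f * g) - H f * H (rev g) := by
  rw [eq_sub_iff_add_eq]
  ext j k
  rw [BM.val_add, BM.val_mul, BM.val_mul, T_val, sub_eq_add_neg, coeff_mul_split]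
  simp only [T_val, H_val, coeff_rev]
  congr 1
  refine tsum_congr fun l => ?_
  congr 2; ring

lemma T_mul_H_add (f g : wiener) : T f * H g + H f * T (rev g) = H (f * g) := by
  ext j k
  rw [BM.val_add, BM.val_mul, BM.val_mul, H_val, add_assoc, coeff_mul_split]
  simp only [T_val, H_val, coeff_rev]
  congr 1
  refine tsum_congr fun l => ?_
  congr 2
  ring

lemma T_one : T 1 = 1 := by
  ext j k
  simp [T_val, coeff_one, BM.val_one, sub_eq_zero]

lemma H_rev_eq_zero {f : wiener} (hf : f.1 ∈ wienerPlus) : H (rev f) = 0 := by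
  obtain ⟨a, ha, h0⟩ := hf
  ext j k
  rw [H_val, coeff_rev, coeff_eq ha, h0 _ (by omega), BM.val_zero]

/-- The sign matrix `J = diag((-1)^j)`. -/
noncomputable def J : BM := BM.diag (-1) (by simp)

lemma J_mul_J : J * J = 1 := by
  ext j k
  rw [J, BM.diag_mul, BM.val_one]
  change (-1) ^ j * (if j = k then (-1) ^ k else 0) = _
  split_ifs with h
  · rw [h, ← mul_pow]; simp
  · simp

lemma J_mul_T (f : wiener) : J * T f = T (alt f) * J := by
  ext j k
  rw [J, BM.diag_mul, BM.mul_diag, T_val, T_val, coeff_alt, zpow_sub₀ (by simp)]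
  have : ((-1 : ℂ) ^ k) ≠ 0 := by simp
  simp only [zpow_natCast]
  field_simp

lemma J_mul_H (f : wiener) : J * H f = -(H (alt f) * J) := by
  ext j k
  rw [BM.val_neg, J, BM.diag_mul, BM.mul_diag, H_val, H_val, coeff_alt, zpow_add₀ (by simp),
    zpow_add₀ (by simp)]
  have : (-1 : ℂ) ^ k * (-1 : ℂ) ^ k = 1 := by rw [← mul_pow]; simp
  simp only [zpow_natCast, zpow_one]
  linear_combination (-(-1) ^ j * coeff f (↑j + ↑k + 1)) * this

end wiener

/-! ### The symbols `Q_x` -/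

lemma wienerPlus_le : wienerPlus ≤ wiener := fun _ ⟨a, ha, _⟩ => ⟨a, ha⟩

/-- For `|t| < 1`, `(1 + t z)/(1 - t z) = 1 + 2 ∑_{n ≥ 1} t^n z^n` on the unit circle. -/
lemma factor_mem (t : ℝ) (ht : |t| < 1) :
    (fun z : Circle => (1 + (t : ℂ) * z) / (1 - (t : ℂ) * z)) ∈ wienerPlus := by
  have hn : ‖(t : ℂ)‖ < 1 := by simpa using ht
  refine ⟨_, HasFourier.of_nat (c := fun n => 2 * (t : ℂ) ^ n - if n = 0 then 1 else 0)
    ?_ fun z => ?_, fun n hn => by simp [hn]⟩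
  · have h1 : Summable fun n : ℕ => 2 * ‖(t : ℂ)‖ ^ n :=
      (summable_geometric_of_lt_one (norm_nonneg _) hn).mul_left 2
    have h2 : Summable fun n : ℕ => if n = 0 then (1 : ℝ) else 0 := (hasSum_ite_eq 0 1).summable
    refine Summable.of_nonneg_of_le (fun _ => norm_nonneg _) (fun n => ?_) (h1.add h2)
    refine (norm_sub_le _ _).trans (le_of_eq ?_)
    rw [norm_mul, norm_pow]
    split_ifs <;> simp
  · have hz : ‖(t : ℂ) * z‖ < 1 := by rwa [norm_mul, Circle.norm_coe, mul_one]
    have hne : 1 - (t : ℂ) * z ≠ 0 := by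
      intro h
      rw [← sub_eq_zero.1 h] at hz
      simp at hz
    have h1 := (hasSum_geometric_of_norm_lt_one hz).mul_left 2
    have h2 : HasSum (fun n : ℕ => if n = 0 then (1 : ℂ) else 0) 1 := hasSum_ite_eq 0 1
    have h3 : (1 + (t : ℂ) * z) / (1 - (t : ℂ) * z) = 2 * (1 - (t : ℂ) * z)⁻¹ - 1 := by
      field_simp
      ring
    rw [h3]
    refine HasSum.congr_fun (h1.sub h2) fun n => ?_
    rw [mul_pow]
    split_ifs with h
    · simp [h]
    · ring

lemma Qsym_mem {M : ℕ} (x : Fin M → ℝ) (hx : ∀ i, |x i| < 1) :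
    (fun z : Circle => Qsym x z) ∈ wienerPlus := by
  have h : (fun z : Circle => Qsym x z)
      = ∏ i, fun z : Circle => (1 + (x i : ℂ) * z) / (1 - (x i : ℂ) * z) := by
    ext z
    rw [Finset.prod_apply, Qsym]
  rw [h]
  exact Submonoid.prod_mem _ fun i _ => factor_mem (x i) (hx i)

lemma Qsym_neg {M : ℕ} (x : Fin M → ℝ) (z : ℂ) : Qsym x (-z) = (Qsym x z)⁻¹ := by
  rw [Qsym, Qsym, ← Finset.prod_inv_distrib]
  refine Finset.prod_congr rfl fun i _ => ?_
  rw [inv_div, mul_neg, sub_neg_eq_add, ← sub_eq_add_neg]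

/-- Since `Q_x⁻¹ = Q_{-x}`, inverse symbols have the same form as the symbols themselves. -/
lemma Qsym_neg_left {M : ℕ} (x : Fin M → ℝ) (z : ℂ) : Qsym (-x) z = (Qsym x z)⁻¹ := by
  rw [← Qsym_neg, Qsym, Qsym]
  simp

lemma Qsym_ne_zero {M : ℕ} (x : Fin M → ℝ) (hx : ∀ i, |x i| < 1) (z : Circle) :
    Qsym x z ≠ 0 := by
  have hne : ∀ t : ℂ, ‖t‖ < 1 → 1 + t * z ≠ 0 := by
    intro t ht h
    have h1 : ‖t * z‖ = 1 := by rw [← neg_eq_of_add_eq_zero_right h]; simp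
    rw [norm_mul, Circle.norm_coe, mul_one] at h1
    exact ht.ne h1
  refine Finset.prod_ne_zero_iff.2 fun i _ => div_ne_zero ?_ ?_
  · exact hne _ (by simpa using hx i)
  · rw [sub_eq_add_neg, ← neg_mul]
    exact hne _ (by simpa using hx i)

/-- The symbol `Q_x` restricted to the unit circle, as an element of the Wiener algebra. -/
noncomputable def qSym {M : ℕ} (x : Fin M → ℝ) (hx : ∀ i, |x i| < 1) : wiener :=
  ⟨fun z => Qsym x z, wienerPlus_le (Qsym_mem x hx)⟩

namespace wiener

/-! ### Factorization of `I - H₁H₂` and `I + L_x L_y` -/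

/-- If `H(f̃) = 0` (that is, `f` is analytic in the disc) then `T(f̃)T(g) = T(f̃ g)`. -/
lemma T_rev_mul_T {f : wiener} (hf : H (rev f) = 0) (g : wiener) :
    T (rev f) * T g = T (rev f * g) := by
  rw [T_mul_T, hf, zero_mul, sub_zero]

lemma T_mul_T_of {g : wiener} (hg : H (rev g) = 0) (f : wiener) :
    T f * T g = T (f * g) := by
  rw [T_mul_T, hg, mul_zero, sub_zero]

lemma T_rev_mul_H {f : wiener} (hf : H (rev f) = 0) (g : wiener) :
    T (rev f) * H g = H (rev f * g) := by
  rw [← T_mul_H_add, hf, zero_mul, add_zero]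

/-- The matrix `H(a) T(ã⁻¹) J`; here `a'` plays the role of `a⁻¹`. -/
noncomputable def L (a a' : wiener) : BM := H a * T (rev a') * J


lemma one_sub_H_mul_H_rev {f f' : wiener} (hf : f * f' = 1) :
    1 - H f * H (rev f') = T f * T f' := by
  rw [T_mul_T, hf, T_one]

/-- The properties of `a = Q_x`, `a' = Q_x⁻¹` on which the identities rest: they are mutually
inverse, `a' = a(-z)`, and both are analytic in the disc, encoded as `H(ã) = H(ã') = 0`. -/
structure IsSym (a a' : wiener) : Prop where
  mul_eq : a * a' = 1
  alt_eq : alt a = a'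
  hankel : H (rev a) = 0
  hankel' : H (rev a') = 0

namespace IsSym
variable {a a' b b' : wiener}

/-- The Wiener–Hopf factorization of `I - H₁H₂`. -/
lemma one_sub_H_mul_H (ha : IsSym a a') (hb : IsSym b b') :
    1 - H (a * rev b') * H (b * rev a') = T (rev b') * T a * (T (rev b) * T a') := by
  have h : rev b' * a * (rev b * a') = 1 := by
    rw [mul_mul_mul_comm, ← rev_mul, mul_comm b', hb.mul_eq, rev_one, one_mul, ha.mul_eq]
  rw [T_rev_mul_T hb.hankel', T_rev_mul_T hb.hankel, T_mul_T, h, T_one, rev_mul, rev_rev,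
    mul_comm a]

/-- Moving the sign matrix through, `L_a L_b` is a product of Toeplitz and Hankel matrices. -/
lemma L_mul_L (hb : IsSym b b') :
    L a a' * L b b' = -(H a * T (rev a') * H b' * T (rev b)) := by
  have h2 : alt b' = b := by
    rw [← hb.alt_eq]
    ext z
    simp [alt]
  have h3 : J * T (rev b') * J = T (rev b) := by
    rw [J_mul_T, alt_rev, h2, mul_assoc, J_mul_J, mul_one]
  calc L a a' * L b b' = H a * T (rev a') * (J * H b) * T (rev b') * J := by
        simp only [L, mul_assoc]
    _ = -(H a * T (rev a') * H b' * (J * T (rev b') * J)) := by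
        rw [J_mul_H, hb.alt_eq]; noncomm_ring
    _ = _ := by rw [h3]

lemma one_add_L_mul_L (ha : IsSym a a') (hb : IsSym b b') :
    1 + L a a' * L b b' = T a * T (rev b') * (T a' * T (rev b)) := by
  have h1 : T a * T (rev b' * a') = T (rev b') - H a * (T (rev a') * H b') := by
    rw [T_mul_T, rev_mul, rev_rev, T_rev_mul_H ha.hankel', mul_comm b', mul_left_comm a,
      ha.mul_eq, mul_one]
  have h2 : T (rev b') * T (rev b) = 1 := by
    rw [T_rev_mul_T hb.hankel', ← rev_mul, mul_comm, hb.mul_eq, rev_one, T_one]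
  calc 1 + L a a' * L b b'
      = (T (rev b') - H a * (T (rev a') * H b')) * T (rev b) := by
        rw [L_mul_L hb, sub_mul, h2]; noncomm_ring
    _ = T a * (T (rev b') * T a') * T (rev b) := by rw [← h1, T_rev_mul_T hb.hankel']
    _ = _ := by simp only [mul_assoc]

/-- `I + L_a L_b` and `I - H₁H₂` are products of the same four invertible Toeplitz factors and
their inverses, in opposite orders. -/
lemma inverse (ha : IsSym a a') (hb : IsSym b b') :
    (1 + L a a' * L b b') * (1 - H (a * rev b') * H (b * rev a')) = 1 ∧
    (1 - H (a * rev b') * H (b * rev a')) * (1 + L a a' * L b b') = 1 := by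
  have h1 : T a * T a' = 1 := by rw [T_mul_T_of ha.hankel', ha.mul_eq, T_one]
  have h2 : T a' * T a = 1 := by rw [T_mul_T_of ha.hankel, mul_comm, ha.mul_eq, T_one]
  have h3 : T (rev b) * T (rev b') = 1 := by
    rw [T_rev_mul_T hb.hankel, ← rev_mul, hb.mul_eq, rev_one, T_one]
  have h4 : T (rev b') * T (rev b) = 1 := by
    rw [T_rev_mul_T hb.hankel', ← rev_mul, mul_comm, hb.mul_eq, rev_one, T_one]
  -- Cancelling an adjacent inverse pair inside a right-associated word.
  have cancel : ∀ {u v : BM}, u * v = 1 → ∀ w, u * (v * w) = w := fun h w => by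
    rw [← mul_assoc, h, one_mul]
  rw [one_add_L_mul_L ha hb, one_sub_H_mul_H ha hb]
  constructor
  · simp only [mul_assoc, cancel h4, cancel h3, cancel h2, h1]
  · simp only [mul_assoc, cancel h1, cancel h2, cancel h3, h4]

end IsSym

/-! ### Back to matrix entries -/

lemma Hop_eq {F : ℂ → ℂ} (f : wiener) (h : ∀ z : Circle, F z = f.1 z) (j k : ℕ) :
    Hop F j k = (H f).val j k := circCoeff_eq f h _

lemma Toep_eq {F : ℂ → ℂ} (f : wiener) (h : ∀ z : Circle, F z = f.1 z) (j k : ℕ) :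
    Toep F j k = (T f).val j k := circCoeff_eq f h _

end wiener

open wiener

lemma qSym_isSym {M : ℕ} (x : Fin M → ℝ) (hx : ∀ i, |x i| < 1) (hx' : ∀ i, |(-x) i| < 1) :
    IsSym (qSym x hx) (qSym (-x) hx') where
  mul_eq := by
    ext z
    change Qsym x z * Qsym (-x) z = 1
    rw [Qsym_neg_left, mul_inv_cancel₀ (Qsym_ne_zero x hx z)]
  alt_eq := by
    ext z
    change Qsym x (-z : Circle) = Qsym (-x) z
    rw [Circle.coe_neg, Qsym_neg, Qsym_neg_left]
  hankel := H_rev_eq_zero (Qsym_mem x hx)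
  hankel' := H_rev_eq_zero (Qsym_mem (-x) hx')

lemma Lop_eq {M : ℕ} (x : Fin M → ℝ) (hx : ∀ i, |x i| < 1) (hx' : ∀ i, |(-x) i| < 1) (j k : ℕ) :
    Lop x j k = (L (qSym x hx) (qSym (-x) hx')).val j k := by
  rw [L, J, BM.mul_diag, BM.val_mul, mul_comm, Lop]
  congr 1
  refine tsum_congr fun l => ?_
  rw [Hop_eq (qSym x hx) fun _ => rfl, Toep_eq (rev (qSym (-x) hx')) fun z => ?_]
  change _ = Qsym (-x) (z⁻¹ : Circle)
  rw [Qsym_neg_left, Circle.coe_inv]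

lemma Hop_quot_eq {M N : ℕ} (x : Fin M → ℝ) (y : Fin N → ℝ) (hx : ∀ i, |x i| < 1)
    (hy' : ∀ i, |(-y) i| < 1) (j k : ℕ) :
    Hop (fun z => Qsym x z * (Qsym y z⁻¹)⁻¹) j k
      = (H (qSym x hx * rev (qSym (-y) hy'))).val j k := by
  refine Hop_eq _ (fun z => ?_) j k
  change _ = Qsym x z * Qsym (-y) (z⁻¹ : Circle)
  rw [Qsym_neg_left, Circle.coe_inv]

/-- Both one-sided inverse identities, entrywise. -/
lemma inverse_entries {M N : ℕ} (x : Fin M → ℝ) (y : Fin N → ℝ)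
    (hx : ∀ i, |x i| < 1) (hy : ∀ i, |y i| < 1) :
    (∀ j k : ℕ,
      ∑' l : ℕ, ((if j = l then (1 : ℂ) else 0) + ∑' m : ℕ, Lop x j m * Lop y m l)
        * ((if l = k then (1 : ℂ) else 0)
            - ∑' m : ℕ, Hop (fun z => Qsym x z * (Qsym y z⁻¹)⁻¹) l m
                * Hop (fun z => Qsym y z * (Qsym x z⁻¹)⁻¹) m k)
      = (if j = k then 1 else 0))
    ∧ (∀ j k : ℕ,
      ∑' l : ℕ, ((if j = l then (1 : ℂ) else 0)
            - ∑' m : ℕ, Hop (fun z => Qsym x z * (Qsym y z⁻¹)⁻¹) j m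
                * Hop (fun z => Qsym y z * (Qsym x z⁻¹)⁻¹) m l)
        * ((if l = k then (1 : ℂ) else 0) + ∑' m : ℕ, Lop x l m * Lop y m k)
      = (if j = k then 1 else 0)) := by
  have hx' : ∀ i, |(-x) i| < 1 := by simpa using hx
  have hy' : ∀ i, |(-y) i| < 1 := by simpa using hy
  obtain ⟨h1, h2⟩ := (qSym_isSym x hx hx').inverse (qSym_isSym y hy hy')
  simp only [Lop_eq x hx hx', Lop_eq y hy hy', Hop_quot_eq x y hx hy', Hop_quot_eq y x hy hx']
  constructor <;> intro j k
  · simpa only [BM.val_mul, BM.val_add, BM.val_sub, BM.val_one] using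
      congrArg (fun m => m.val j k) h1
  · simpa only [BM.val_mul, BM.val_add, BM.val_sub, BM.val_one] using
      congrArg (fun m => m.val j k) h2

/-- With `φ = Q_x Q̃_y`, `H₁ = H(Q_x Q̃_y⁻¹)`, `H₂ = H(Q_y Q̃_x⁻¹)`:
`I - H(φ)H(φ̃⁻¹) = T(φ)T(φ⁻¹)`, and `(I + L_x L_y)⁻¹ = I - H₁H₂`,
`(I + L_y L_x)⁻¹ = I - H₂H₁` (all entrywise, inverses two-sided). -/
theorem basic_inverse_identities {M N : ℕ} (x : Fin M → ℝ) (y : Fin N → ℝ)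
    (hx : ∀ i, 0 ≤ x i ∧ x i < 1) (hy : ∀ j, 0 ≤ y j ∧ y j < 1) :
    (∀ j k : ℕ,
      (if j = k then (1 : ℂ) else 0)
        - (∑' l : ℕ, Hop (fun z => Qsym x z * Qsym y z⁻¹) j l
            * Hop (fun z => (Qsym x z⁻¹ * Qsym y z)⁻¹) l k)
      = ∑' l : ℕ, Toep (fun z => Qsym x z * Qsym y z⁻¹) j l
            * Toep (fun z => (Qsym x z * Qsym y z⁻¹)⁻¹) l k)
    ∧ (∀ j k : ℕ,
      ∑' l : ℕ, ((if j = l then (1 : ℂ) else 0) + ∑' m : ℕ, Lop x j m * Lop y m l)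
        * ((if l = k then (1 : ℂ) else 0)
            - ∑' m : ℕ, Hop (fun z => Qsym x z * (Qsym y z⁻¹)⁻¹) l m
                * Hop (fun z => Qsym y z * (Qsym x z⁻¹)⁻¹) m k)
      = (if j = k then 1 else 0))
    ∧ (∀ j k : ℕ,
      ∑' l : ℕ, ((if j = l then (1 : ℂ) else 0)
            - ∑' m : ℕ, Hop (fun z => Qsym x z * (Qsym y z⁻¹)⁻¹) j m
                * Hop (fun z => Qsym y z * (Qsym x z⁻¹)⁻¹) m l)
        * ((if l = k then (1 : ℂ) else 0) + ∑' m : ℕ, Lop x l m * Lop y m k)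
      = (if j = k then 1 else 0))
    ∧ (∀ j k : ℕ,
      ∑' l : ℕ, ((if j = l then (1 : ℂ) else 0) + ∑' m : ℕ, Lop y j m * Lop x m l)
        * ((if l = k then (1 : ℂ) else 0)
            - ∑' m : ℕ, Hop (fun z => Qsym y z * (Qsym x z⁻¹)⁻¹) l m
                * Hop (fun z => Qsym x z * (Qsym y z⁻¹)⁻¹) m k)
      = (if j = k then 1 else 0))
    ∧ (∀ j k : ℕ,
      ∑' l : ℕ, ((if j = l then (1 : ℂ) else 0)
            - ∑' m : ℕ, Hop (fun z => Qsym y z * (Qsym x z⁻¹)⁻¹) j m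
                * Hop (fun z => Qsym x z * (Qsym y z⁻¹)⁻¹) m l)
        * ((if l = k then (1 : ℂ) else 0) + ∑' m : ℕ, Lop y l m * Lop x m k)
      = (if j = k then 1 else 0)) := by
  have hx0 : ∀ i, |x i| < 1 := fun i => abs_lt.2 ⟨by linarith [(hx i).1], (hx i).2⟩
  have hy0 : ∀ i, |y i| < 1 := fun i => abs_lt.2 ⟨by linarith [(hy i).1], (hy i).2⟩
  have hx' : ∀ i, |(-x) i| < 1 := by simpa using hx0
  have hy' : ∀ i, |(-y) i| < 1 := by simpa using hy0
  obtain ⟨h1, h2⟩ := inverse_entries x y hx0 hy0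
  obtain ⟨h3, h4⟩ := inverse_entries y x hy0 hx0
  refine ⟨fun j k => ?_, h1, h2, h3, h4⟩
  let f : wiener := qSym x hx0 * rev (qSym y hy0)
  let f' : wiener := qSym (-x) hx' * rev (qSym (-y) hy')
  have hff : f * f' = 1 := by
    rw [mul_mul_mul_comm, (qSym_isSym x hx0 hx').mul_eq, ← rev_mul,
      (qSym_isSym y hy0 hy').mul_eq, rev_one, one_mul]
  have hf : ∀ z : Circle, Qsym x z * Qsym y (z : ℂ)⁻¹ = f.1 z := fun _ => rfl
  have hf' : ∀ z : Circle, (Qsym x z * Qsym y (z : ℂ)⁻¹)⁻¹ = f'.1 z := fun z => by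
    change _ = Qsym (-x) z * Qsym (-y) (z⁻¹ : Circle)
    rw [Qsym_neg_left, Qsym_neg_left, Circle.coe_inv, mul_inv]
  have hr : ∀ z : Circle, (Qsym x (z : ℂ)⁻¹ * Qsym y z)⁻¹ = (rev f').1 z := fun z => by
    refine Eq.trans ?_ (hf' z⁻¹)
    rw [Circle.coe_inv, inv_inv]
  simp only [Hop_eq (F := fun z => Qsym x z * Qsym y z⁻¹) f hf,
    Hop_eq (F := fun z => (Qsym x z⁻¹ * Qsym y z)⁻¹) (rev f') hr,
    Toep_eq (F := fun z => Qsym x z * Qsym y z⁻¹) f hf,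
    Toep_eq (F := fun z => (Qsym x z * Qsym y z⁻¹)⁻¹) f' hf']
  simpa only [BM.val_mul, BM.val_sub, BM.val_one] using
    congrArg (fun m => m.val j k) (one_sub_H_mul_H_rev hff)
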